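/- arXiv:math/0509362 — 2 statements merged into one kernel-verified Lean document; each statement's English description precedes it below -/
import Mathlib

section
/- Let (W, S) be an arbitrary Coxeter system, let w ∈ W_c be fully commutative and let s ∈ S be such that ℓ(sw) > ℓ(w) and sw is not fully commutative. Then there exist t ∈ S with 3 ≤ m(s,t) < ∞ and a reduced factorization w = w₁w₂w₃ such that (a) every generator occurring in a reduced word for w₁ is distinct from s and commutes with s, and (b) w₂ is the alternating product t s t s ⋯ of length m(s,t) − 1 beginning with t. Consequently sw admits reduced factorizations s·w₁·w₂·w₃ and w₁·(s w₂)·w₃. -/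
open CoxeterSystem

variable {B W : Type*} [Group W] {M : CoxeterMatrix B} (cs : CoxeterSystem M W)

/-- `m(s,t) ≥ 3`: `s` and `t` are distinct noncommuting generators
(`M s t = 0` encodes `m(s,t) = ∞`). -/
def Noncomm (M : CoxeterMatrix B) (s t : B) : Prop := M s t = 0 ∨ 3 ≤ M s t

/-- The longest element `w_{st}` of the rank-2 parabolic subgroup `⟨s,t⟩`
(meaningful when `3 ≤ M s t < ∞`). -/
def longest (s t : B) : W := cs.wordProd (alternatingWord s t (M s t))

/-- `w` is complex: it admits a reduced factorization `x₁ · w_{st} · x₂` where `w_{st}`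
is the longest element of a rank-2 parabolic subgroup `⟨s,t⟩` with `3 ≤ m(s,t) < ∞`. -/
def IsComplex (w : W) : Prop :=
  ∃ s t : B, 3 ≤ M s t ∧ ∃ x₁ x₂ : W,
    w = x₁ * longest cs s t * x₂ ∧
    cs.length w = cs.length x₁ + cs.length (longest cs s t : W) + cs.length x₂

/-- `w` is fully commutative, i.e. `w ∈ W_c`. -/
def FullyComm (w : W) : Prop := ¬ IsComplex cs w

/-- `x` is weakly complex: `x` is complex and `x = s·u` reduced with `u` fully commutative. -/
def IsWeaklyComplex (x : W) : Prop :=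
  IsComplex cs x ∧ ∃ (s : B) (u : W), FullyComm cs u ∧ x = cs.simple s * u ∧
    cs.length x = 1 + cs.length u

/-- The alternating product `t s t s ⋯` with `k` factors, beginning with `t`. -/
def altProd (t s : B) (k : ℕ) : W :=
  cs.wordProd ((List.range k).map (fun i => if i % 2 = 0 then t else s))

/-- The left descent set `𝓛(w)`. -/
def leftDescents (w : W) : Set B := {i | cs.IsLeftDescent w i}

/-- The right descent set `𝓡(w)`. -/
def rightDescents (w : W) : Set B := {i | cs.IsRightDescent w i}

/-- `w` is a reduced product of distinct pairwise commuting generators. -/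
def IsCommProd (w : W) : Prop :=
  ∃ l : List B, l.Nodup ∧ (∀ u ∈ l, ∀ u' ∈ l, u ≠ u' → M u u' = 2) ∧
    cs.IsReduced l ∧ w = cs.wordProd l

/-- `y` is left star reducible to `x` with respect to the pair `{s,t}`:
`x` and `y` lie in the same left `{s,t}`-string and `ℓ(x) = ℓ(y) − 1`. -/
def LeftStarReducible (s t : B) (y x : W) : Prop :=
  Noncomm M s t ∧
  ((cs.IsLeftDescent y s ∧ ¬ cs.IsLeftDescent y t ∧ x = cs.simple s * y ∧
      cs.IsLeftDescent x t) ∨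
   (cs.IsLeftDescent y t ∧ ¬ cs.IsLeftDescent y s ∧ x = cs.simple t * y ∧
      cs.IsLeftDescent x s))

/-- `y` is right star reducible to `x` with respect to the pair `{s,t}`. -/
def RightStarReducible (s t : B) (y x : W) : Prop :=
  Noncomm M s t ∧
  ((cs.IsRightDescent y s ∧ ¬ cs.IsRightDescent y t ∧ x = y * cs.simple s ∧
      cs.IsRightDescent x t) ∨
   (cs.IsRightDescent y t ∧ ¬ cs.IsRightDescent y s ∧ x = y * cs.simple t ∧
      cs.IsRightDescent x s))

/-- `y` is star reducible to `x`: there is a (possibly empty) chain of left and right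
star reductions from `y` to `x`. -/
def StarReducible (y x : W) : Prop :=
  Relation.ReflTransGen
    (fun a b => ∃ s t : B, LeftStarReducible cs s t a b ∨ RightStarReducible cs s t a b) y x

/-- Property F: every fully commutative element is star reducible to a reduced product of
distinct pairwise commuting generators. -/
def PropertyF : Prop := ∀ w : W, FullyComm cs w → ∃ x : W, StarReducible cs w x ∧ IsCommProd cs x

/-- `n(w)`: the maximum `k` such that `w` admits a reduced factorization `w = w₁·w₂·w₃`
with `w₂` a reduced product of `k` distinct pairwise commuting generators. -/
noncomputable def nval (w : W) : ℕ :=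
  sSup {k | ∃ w₁ w₂ w₃ : W, w = w₁ * w₂ * w₃ ∧
    cs.length w = cs.length w₁ + cs.length w₂ + cs.length w₃ ∧
    IsCommProd cs w₂ ∧ cs.length w₂ = k}

/-- The Bruhat order: `x ≤ w` iff some reduced word for `w` has a subword that is a
reduced word for `x`. -/
def BruhatLE (x w : W) : Prop :=
  ∃ l l' : List B, cs.IsReduced l ∧ cs.wordProd l = w ∧
    l'.Sublist l ∧ cs.IsReduced l' ∧ cs.wordProd l' = x

/-- `w = wI · wII` is the coset decomposition of `w` with respect to `I = {s,t}`:
`wI ∈ W_I`, `𝓛(wII) ∩ I = ∅` and `ℓ(w) = ℓ(wI) + ℓ(wII)`. -/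
def CosetDecompL (s t : B) (w wI wII : W) : Prop :=
  w = wI * wII ∧ wI ∈ Subgroup.closure {cs.simple s, cs.simple t} ∧
  ¬ cs.IsLeftDescent wII s ∧ ¬ cs.IsLeftDescent wII t ∧
  cs.length w = cs.length wI + cs.length wII

/-- `w = wII · wI` is the right coset decomposition of `w` with respect to `I = {s,t}`:
`wI ∈ W_I`, `𝓡(wII) ∩ I = ∅` and `ℓ(w) = ℓ(wII) + ℓ(wI)`. -/
def CosetDecompR (s t : B) (w wII wI : W) : Prop :=
  w = wII * wI ∧ wI ∈ Subgroup.closure {cs.simple s, cs.simple t} ∧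
  ¬ cs.IsRightDescent wII s ∧ ¬ cs.IsRightDescent wII t ∧
  cs.length w = cs.length wII + cs.length wI

/-- `k_ε(J) = (−1)^{|J ∩ ε⁻¹(0)|}` for a set `J` of generators. -/
noncomputable def kSet (ε : B → Bool) (J : Set B) : ℤ :=
  (-1) ^ (J ∩ {i | ε i = false}).ncard

/-- `k_ε(w) = k_ε(𝓛(w)) · k_ε(𝓡(w))`. -/
noncomputable def kElt (ε : B → Bool) (w : W) : ℤ :=
  kSet ε (leftDescents cs w) * kSet ε (rightDescents cs w)

/-!
If `i` and `j` are left descents of an element `w`, then `w_{ij}` is a reduced left factor of `w`.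
Indeed, a left inversion of `u v` is a left inversion of `u` or the conjugate by `u` of a left
inversion of `v`, because counting occurrences in left inversion sequences modulo 2 is a cocycle.
As `sᵢ sⱼ` has order exactly `m(i,j)` by the geometric representation, `sᵢ` is not a left inversion
of an alternating product `sⱼ sᵢ sⱼ ⋯` shorter than `w_{ij}`, so the alternating left factor of `w`
can be lengthened one letter at a time.

A complex element either has two left descents `a`, `b` with `3 ≤ m(a,b)`, or stays complex after
removal of some left descent. Let `w` be fully commutative and `s` not a left descent of `w`, with
`s w` complex. If some left descent `t ≠ s` of `s w` does not commute with `s`, then `w_{st}` is a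
reduced left factor of `s w`, so `t s t ⋯` of length `m(s,t) - 1` is one of `w`. Otherwise all left
descents of `s w` other than `s` are left descents of `w`; two of them with `3 ≤ m(a,b)` would make
`w` complex, so one of them can be stripped off `w` while keeping `s w` complex, and the argument
repeats with a shorter `w`.
-/

section DihedralReflections

open Polynomial Polynomial.Chebyshev

lemma reflection_mul_reflection_pow_apply_eq_chebyshevU {R V : Type*} [CommRing R]
    [AddCommGroup V] [Module R V] {x y : V} {f g : Module.Dual R V} {c : R}
    (hfx : f x = 2) (hgy : g y = 2) (hfy : f y = -2 * c) (hgx : g x = -2 * c) (k : ℕ) :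
    ((Module.reflection hfx * Module.reflection hgy) ^ k) x =
      (U R (2 * k)).eval c • x + (U R (2 * k - 1)).eval c • y := by
  induction k with
  | zero => simp
  | succ k ih =>
    have hodd : (U R (2 * k + 1)).eval c =
        2 * c * (U R (2 * k)).eval c - (U R (2 * k - 1)).eval c := by
      rw [show (2 * k + 1 : ℤ) = 2 * k - 1 + 2 by ring, U_add_two, sub_add_cancel]
      simp
    have heven : (U R (2 * k + 2)).eval c =
        2 * c * (U R (2 * k + 1)).eval c - (U R (2 * k)).eval c := by
      rw [U_add_two]
      simp
    rw [pow_succ', LinearEquiv.mul_apply, ih, LinearEquiv.mul_apply, Nat.cast_succ,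
      show (2 * (k + 1) : ℤ) = 2 * k + 2 by ring, show (2 * k + 2 - 1 : ℤ) = 2 * k + 1 by ring,
      heven, hodd]
    simp only [Module.reflection_apply, map_add, map_smul, map_sub, hfx, hgy, hfy, hgx]
    module

lemma reflection_mul_reflection_pow_eq_one {K V : Type*} [Field K] [NeZero (2 : K)]
    [AddCommGroup V] [Module K V] {x y : V} {f g : Module.Dual K V} {c : K}
    (hfx : f x = 2) (hgy : g y = 2) (hfy : f y = -2 * c) (hgx : g x = -2 * c) (hc : c ^ 2 ≠ 1)
    {k : ℕ} (hx : ((Module.reflection hfx * Module.reflection hgy) ^ k) x = x)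
    (hy : ((Module.reflection hfx * Module.reflection hgy) ^ k) y = y) :
    (Module.reflection hfx * Module.reflection hgy) ^ k = 1 := by
  have hdet : 1 - c ^ 2 ≠ 0 := sub_ne_zero.mpr hc.symm
  have h2 : (2 : K) ≠ 0 := NeZero.ne 2
  have fixes_ker (u : V) (hfu : f u = 0) (hgu : g u = 0) :
      ((Module.reflection hfx * Module.reflection hgy) ^ k) u = u := by
    rw [LinearEquiv.coe_pow]
    refine Function.IsFixedPt.iterate ?_ k
    simp [Function.IsFixedPt, Module.reflection_apply, hfu, hgu]
  ext z
  set α := (f z + c * g z) / (2 * (1 - c ^ 2)) with hα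
  set β := (g z + c * f z) / (2 * (1 - c ^ 2)) with hβ
  have hker := fixes_ker (z - (α • x + β • y))
    (by simp only [map_sub, map_add, map_smul, hfx, hfy, smul_eq_mul, hα, hβ]; field_simp; ring)
    (by simp only [map_sub, map_add, map_smul, hgx, hgy, smul_eq_mul, hα, hβ]; field_simp; ring)
  rw [map_sub, map_add, map_smul, map_smul, hx, hy] at hker
  exact sub_left_injective hker

lemma sin_pi_div_pos {m : ℕ} (h0 : m ≠ 0) (h1 : m ≠ 1) : 0 < Real.sin (Real.pi / m) := by
  have hm : (1 : ℝ) < m := by exact_mod_cast show 1 < m by lia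
  exact Real.sin_pos_of_pos_of_lt_pi (by positivity) (div_lt_self Real.pi_pos hm)

lemma chebyshevU_eval_cos_eq_one_and_eq_zero_iff {θ : ℝ} (hθ : Real.sin θ ≠ 0) (n : ℤ) :
    ((U ℝ n).eval (Real.cos θ) = 1 ∧ (U ℝ (n - 1)).eval (Real.cos θ) = 0) ↔
      Real.cos (n * θ) = 1 := by
  have hU := U_real_cos θ n
  have hU' := U_real_cos θ (n - 1)
  rw [add_mul, one_mul, Real.sin_add] at hU
  rw [Int.cast_sub, Int.cast_one, sub_add_cancel] at hU'
  constructor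
  · rintro ⟨h, h'⟩
    rw [h', zero_mul] at hU'
    rw [h, ← hU', zero_mul, zero_add] at hU
    exact mul_right_cancel₀ hθ hU.symm
  · intro h
    have hsin : Real.sin (n * θ) = 0 := Real.sin_eq_zero_iff_cos_eq.mpr (Or.inl h)
    rw [h, hsin, zero_mul, zero_add] at hU
    rw [hsin] at hU'
    exact ⟨mul_right_cancel₀ hθ hU, (mul_eq_zero.mp hU').resolve_right hθ⟩

lemma cos_two_mul_mul_pi_div_eq_one_iff {m : ℕ} (h0 : m ≠ 0) (k : ℕ) :
    Real.cos (2 * k * (Real.pi / m)) = 1 ↔ m ∣ k := by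
  have hm : (m : ℝ) ≠ 0 := Nat.cast_ne_zero.mpr h0
  have hpi := Real.pi_ne_zero
  rw [Real.cos_eq_one_iff, ← Int.natCast_dvd_natCast]
  refine exists_congr fun n ↦ ?_
  calc (n : ℝ) * (2 * Real.pi) = 2 * k * (Real.pi / m) ↔ (k : ℝ) = m * n := by
        field_simp
        exact ⟨fun h ↦ by linarith, fun h ↦ by linarith⟩
    _ ↔ (k : ℤ) = m * n := by exact_mod_cast Iff.rfl

lemma chebyshevU_eval_cos_pi_div_iff_dvd {m : ℕ} (h1 : m ≠ 1) (k : ℕ) :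
    ((U ℝ (2 * k)).eval (Real.cos (Real.pi / m)) = 1 ∧
      (U ℝ (2 * k - 1)).eval (Real.cos (Real.pi / m)) = 0) ↔ m ∣ k := by
  obtain rfl | h0 := eq_or_ne m 0
  · simp
  · rw [chebyshevU_eval_cos_eq_one_and_eq_zero_iff (sin_pi_div_pos h0 h1).ne',
      ← cos_two_mul_mul_pi_div_eq_one_iff h0]
    norm_cast

end DihedralReflections

section GeometricRepresentation

open Polynomial Polynomial.Chebyshev

/-- The coroot of the simple root `eᵢ` in the geometric representation of the Coxeter group of
`M` on `B →₀ ℝ`, that is, the linear form `2 ⟨eᵢ, ·⟩` for `⟨eᵢ, eⱼ⟩ = -cos (π / m(i,j))`. The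
convention `π / 0 = 0` gives the value `⟨eᵢ, eⱼ⟩ = -1` when `m(i,j) = ∞`. -/
noncomputable def simpleCoroot (M : CoxeterMatrix B) (i : B) : Module.Dual ℝ (B →₀ ℝ) :=
  Finsupp.linearCombination ℝ fun j ↦ -2 * Real.cos (Real.pi / M i j)

lemma simpleCoroot_single (i j : B) :
    simpleCoroot M i (Finsupp.single j 1) = -2 * Real.cos (Real.pi / M i j) := by
  simp [simpleCoroot]

lemma simpleCoroot_single_self (i : B) : simpleCoroot M i (Finsupp.single i 1) = 2 := by
  simp [simpleCoroot_single]

/-- The image of the generator `sᵢ` in the geometric representation. -/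
noncomputable def simpleReflection (M : CoxeterMatrix B) (i : B) : (B →₀ ℝ) ≃ₗ[ℝ] (B →₀ ℝ) :=
  Module.reflection (simpleCoroot_single_self (M := M) i)

lemma simpleReflection_mul_pow_single_left (i j : B) (k : ℕ) :
    ((simpleReflection M i * simpleReflection M j) ^ k) (Finsupp.single i 1) =
      (U ℝ (2 * k)).eval (Real.cos (Real.pi / M i j)) • Finsupp.single i 1 +
        (U ℝ (2 * k - 1)).eval (Real.cos (Real.pi / M i j)) • Finsupp.single j 1 :=
  reflection_mul_reflection_pow_apply_eq_chebyshevU _ _ (simpleCoroot_single i j)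
    (by rw [simpleCoroot_single, M.symmetric]) k

lemma simpleReflection_mul_pow_single_left_eq_iff {i j : B} (hij : i ≠ j) (k : ℕ) :
    ((simpleReflection M i * simpleReflection M j) ^ k) (Finsupp.single i 1) =
      Finsupp.single i 1 ↔ M i j ∣ k := by
  rw [simpleReflection_mul_pow_single_left,
    ← chebyshevU_eval_cos_pi_div_iff_dvd (M.off_diagonal i j hij)]
  constructor
  · intro h
    exact ⟨by simpa [hij] using DFunLike.congr_fun h i,
      by simpa [hij.symm] using DFunLike.congr_fun h j⟩
  · rintro ⟨hi, hj⟩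
    rw [hi, hj, one_smul, zero_smul, add_zero]

lemma simpleReflection_inv (i : B) : (simpleReflection M i)⁻¹ = simpleReflection M i :=
  Module.reflection_inv _

lemma simpleReflection_isLiftable : M.IsLiftable (simpleReflection M) := by
  intro i j
  obtain rfl | hij := eq_or_ne i j
  · rw [M.diagonal, pow_one, mul_eq_one_iff_eq_inv, simpleReflection_inv]
  obtain h0 | h0 := eq_or_ne (M i j) 0
  · rw [h0, pow_zero]
  have hinv : (simpleReflection M i * simpleReflection M j) ^ M i j =
      ((simpleReflection M j * simpleReflection M i) ^ M i j)⁻¹ := by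
    rw [← inv_pow, mul_inv_rev, simpleReflection_inv, simpleReflection_inv]
  have fixes_i := (simpleReflection_mul_pow_single_left_eq_iff hij (M i j)).mpr dvd_rfl
  have fixes_j : ((simpleReflection M i * simpleReflection M j) ^ M i j) (Finsupp.single j 1) =
      Finsupp.single j 1 := by
    rw [hinv]
    exact (LinearEquiv.symm_apply_eq _).mpr
      ((simpleReflection_mul_pow_single_left_eq_iff hij.symm _).mpr (M.symmetric j i).dvd).symm
  have hcos : Real.cos (Real.pi / M i j) ^ 2 ≠ 1 := by
    have hsin := sin_pi_div_pos h0 (M.off_diagonal i j hij)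
    nlinarith [Real.sin_sq_add_cos_sq (Real.pi / M i j)]
  exact reflection_mul_reflection_pow_eq_one _ _ (simpleCoroot_single i j)
    (by rw [simpleCoroot_single, M.symmetric]) hcos fixes_i fixes_j

/-- The geometric (Tits) representation of a Coxeter group. -/
noncomputable def geometricRep : W →* ((B →₀ ℝ) ≃ₗ[ℝ] (B →₀ ℝ)) :=
  cs.lift ⟨simpleReflection M, simpleReflection_isLiftable⟩

lemma geometricRep_simple (i : B) : geometricRep cs (cs.simple i) = simpleReflection M i :=
  cs.lift_apply_simple simpleReflection_isLiftable i

lemma geometricRep_simple_apply_of_ne {i j : B} (hij : i ≠ j) (v : B →₀ ℝ) :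
    geometricRep cs (cs.simple i) v j = v j := by
  simp [geometricRep_simple, simpleReflection, Module.reflection_apply, hij]

theorem orderOf_simple_mul_simple (i j : B) :
    orderOf (cs.simple i * cs.simple j) = M i j := by
  obtain rfl | hij := eq_or_ne i j
  · rw [cs.simple_mul_simple_self, orderOf_one, M.diagonal]
  refine Nat.dvd_antisymm (orderOf_dvd_of_pow_eq_one (cs.simple_mul_simple_pow i j)) ?_
  have := congr_arg (geometricRep cs) (pow_orderOf_eq_one (cs.simple i * cs.simple j))
  rw [map_pow, map_mul, geometricRep_simple, geometricRep_simple, map_one] at this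
  rw [← simpleReflection_mul_pow_single_left_eq_iff hij, this, LinearEquiv.coe_one, id]

end GeometricRepresentation

section Parabolic

/-- The standard parabolic subgroup `W_I` generated by the simple reflections in `I`. -/
def parabolic (I : Set B) : Subgroup W := Subgroup.closure (cs.simple '' I)

variable {cs}

lemma simple_mem_parabolic {I : Set B} {i : B} (hi : i ∈ I) : cs.simple i ∈ parabolic cs I :=
  Subgroup.subset_closure (Set.mem_image_of_mem _ hi)

lemma geometricRep_apply_of_mem_parabolic {I : Set B} {i : B} (hi : i ∉ I) {w : W}
    (hw : w ∈ parabolic cs I) (v : B →₀ ℝ) : geometricRep cs w v i = v i := by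
  induction hw using Subgroup.closure_induction'' generalizing v with
  | one => simp
  | mem x hx =>
    obtain ⟨j, hj, rfl⟩ := hx
    exact geometricRep_simple_apply_of_ne cs (by rintro rfl; exact hi hj) v
  | inv_mem x hx =>
    obtain ⟨j, hj, rfl⟩ := hx
    rw [cs.inv_simple]
    exact geometricRep_simple_apply_of_ne cs (by rintro rfl; exact hi hj) v
  | mul x y _ _ hx hy => rw [map_mul, LinearEquiv.mul_apply, hx, hy]

theorem simple_mem_parabolic_iff {I : Set B} {i : B} : cs.simple i ∈ parabolic cs I ↔ i ∈ I := by
  refine ⟨fun hmem ↦ by_contra fun hi ↦ ?_, simple_mem_parabolic⟩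
  have h := geometricRep_apply_of_mem_parabolic hi hmem (Finsupp.single i 1)
  norm_num [geometricRep_simple, simpleReflection, Module.reflection_apply,
    simpleCoroot_single_self] at h

end Parabolic

section Inversions

open scoped Classical in
/-- The operator `f ↦ (t ↦ [t = sᵢ] + f (sᵢ t sᵢ))` on functions `W → ℤ/2`. These operators define
an action of `W`, which carries `0` to the indicator function of the left inversions. -/
noncomputable def invParityStep (i : B) : Function.End (W → ZMod 2) :=
  fun f t ↦ (if t = cs.simple i then 1 else 0) + f (cs.simple i * t * cs.simple i)

open scoped Classical in
lemma prod_map_invParityStep_apply (ω : List B) (f : W → ZMod 2) (t : W) :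
    (ω.map (invParityStep cs)).prod f t =
      ((cs.leftInvSeq ω).count t : ZMod 2) + f ((cs.wordProd ω)⁻¹ * t * cs.wordProd ω) := by
  induction ω generalizing f t with
  | nil => simp [Function.End.one_def]
  | cons i ω ih =>
    have hcount : ((cs.leftInvSeq ω).map (MulAut.conj (cs.simple i))).count t =
        (cs.leftInvSeq ω).count (cs.simple i * t * cs.simple i) := by
      have := List.count_map_of_injective (cs.leftInvSeq ω) (MulAut.conj (cs.simple i))
        (MulAut.conj (cs.simple i)).injective (cs.simple i * t * cs.simple i)
      simpa [mul_assoc] using this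
    have hstep : ((i :: ω).map (invParityStep cs)).prod f t =
        (if t = cs.simple i then 1 else 0) +
          (ω.map (invParityStep cs)).prod f (cs.simple i * t * cs.simple i) := rfl
    rw [hstep, ih, leftInvSeq, List.count_cons, hcount, cs.wordProd_cons, mul_inv_rev,
      cs.inv_simple]
    simp only [beq_iff_eq, eq_comm (a := t), Nat.cast_add, Nat.cast_ite, Nat.cast_one,
      Nat.cast_zero, mul_assoc]
    ring

open scoped Classical in
lemma even_count_leftInvSeq_alternatingWord (i j : B) (t : W) :
    Even ((cs.leftInvSeq (alternatingWord i j (2 * M i j))).count t) := by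
  set r : ℕ → W := fun k ↦ cs.wordProd (alternatingWord j i (2 * k + 1)) with hr
  have leftInvSeq_eq : cs.leftInvSeq (alternatingWord i j (2 * M i j)) =
      (List.range (2 * M i j)).map r := by
    refine List.ext_getElem (by simp) fun k h₁ h₂ ↦ ?_
    rw [cs.getElem_leftInvSeq_alternatingWord i j (M i j) k (by simpa using h₁)]
    simp [hr]
  have periodic (k : ℕ) : r (M i j + k) = r k := by
    simp only [hr, cs.prod_alternatingWord_eq_mul_pow]
    rw [show (2 * (M i j + k) + 1) / 2 = M i j + k by lia, show (2 * k + 1) / 2 = k by lia,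
      pow_add, cs.simple_mul_simple_pow', one_mul]
    simp
  rw [leftInvSeq_eq, two_mul, List.range_add, List.map_append, List.map_map, List.count_append,
    show r ∘ (M i j + ·) = r from funext periodic]
  exact Even.add_self _

lemma prod_map_alternatingWord_two_mul {N : Type*} [Monoid N] (f : B → N) (i j : B) (m : ℕ) :
    ((alternatingWord i j (2 * m)).map f).prod = (f i * f j) ^ m := by
  induction m with
  | zero => simp [alternatingWord]
  | succ m ih =>
    rw [pow_succ, ← ih, show 2 * (m + 1) = 2 * m + 1 + 1 by ring, alternatingWord_succ,
      alternatingWord_succ]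
    simp

lemma invParityStep_isLiftable : M.IsLiftable (invParityStep cs) := by
  classical
  intro i j
  have hone : cs.wordProd (alternatingWord i j (2 * M i j)) = 1 := by
    simp [cs.prod_alternatingWord_eq_mul_pow]
  rw [← prod_map_alternatingWord_two_mul]
  funext f t
  rw [prod_map_invParityStep_apply, hone,
    ZMod.natCast_eq_zero_iff_even.mpr (even_count_leftInvSeq_alternatingWord cs i j t)]
  simp [Function.End.one_def]

/-- The number, modulo 2, of occurrences of `t` in the left inversion sequence of any word
for `w`. It is obtained from the action generated by `invParityStep`, hence does not depend on a
choice of word. -/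
noncomputable def invParity (w t : W) : ZMod 2 :=
  cs.lift ⟨invParityStep cs, invParityStep_isLiftable cs⟩ w 0 t

lemma lift_invParityStep_wordProd (ω : List B) :
    cs.lift ⟨invParityStep cs, invParityStep_isLiftable cs⟩ (cs.wordProd ω) =
      (ω.map (invParityStep cs)).prod := by
  simp only [wordProd, map_list_prod, List.map_map, Function.comp_def, cs.lift_apply_simple]

open scoped Classical in
lemma invParity_wordProd (ω : List B) (t : W) :
    invParity cs (cs.wordProd ω) t = (cs.leftInvSeq ω).count t := by
  simp [invParity, lift_invParityStep_wordProd, prod_map_invParityStep_apply]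

lemma invParity_mul (u v t : W) :
    invParity cs (u * v) t = invParity cs u t + invParity cs v (u⁻¹ * t * u) := by
  classical
  obtain ⟨ω, rfl⟩ := cs.wordProd_surjective u
  rw [invParity_wordProd, invParity, map_mul, lift_invParityStep_wordProd]
  exact prod_map_invParityStep_apply cs ω _ t

lemma invParity_one (t : W) : invParity cs 1 t = 0 := by
  simpa using invParity_wordProd cs [] t

open scoped Classical in
lemma invParity_simple (i : B) (t : W) :
    invParity cs (cs.simple i) t = if t = cs.simple i then 1 else 0 := by
  simpa [List.count_singleton, eq_comm (a := t)] using invParity_wordProd cs [i] t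

variable {cs}

lemma invParity_self_of_isReflection {t : W} (ht : cs.IsReflection t) : invParity cs t t = 1 := by
  obtain ⟨u, i, rfl⟩ := ht
  have hinv : invParity cs u (u * cs.simple i * u⁻¹) + invParity cs u⁻¹ (cs.simple i) = 0 := by
    rw [← invParity_one cs (u * cs.simple i * u⁻¹), ← mul_inv_cancel u, invParity_mul]
    simp [mul_assoc]
  have hconj : u⁻¹ * (u * cs.simple i * u⁻¹) * u = cs.simple i := by group
  have hfix : (u * cs.simple i)⁻¹ * (u * cs.simple i * u⁻¹) * (u * cs.simple i) =
      cs.simple i := by group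
  rw [invParity_mul, invParity_mul, hfix, hconj, invParity_simple, if_pos rfl]
  linear_combination hinv

lemma isLeftInversion_of_invParity_eq_one {w t : W} (h : invParity cs w t = 1) :
    cs.IsLeftInversion w t := by
  classical
  obtain ⟨ω, hω, rfl⟩ := cs.exists_isReduced w
  rw [invParity_wordProd] at h
  refine cs.isLeftInversion_of_mem_leftInvSeq hω (List.count_pos_iff.mp (Nat.pos_of_ne_zero ?_))
  intro h0
  simp [h0] at h

theorem isLeftInversion_iff_invParity_eq_one {w t : W} :
    cs.IsLeftInversion w t ↔ invParity cs w t = 1 := by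
  refine ⟨fun ⟨ht, hlt⟩ ↦ by_contra fun h ↦ ?_, isLeftInversion_of_invParity_eq_one⟩
  have hw : invParity cs w t = 0 := (by decide : ∀ a : ZMod 2, a ≠ 1 → a = 0) _ h
  have htw : cs.IsLeftInversion (t * w) t := isLeftInversion_of_invParity_eq_one <| by
    simp [invParity_mul, invParity_self_of_isReflection ht, hw]
  have := htw.2
  rw [← mul_assoc, ht.mul_self, one_mul] at this
  exact this.not_gt hlt

theorem isLeftInversion_or_of_mul {u v t : W} (h : cs.IsLeftInversion (u * v) t) :
    cs.IsLeftInversion u t ∨ cs.IsLeftInversion v (u⁻¹ * t * u) := by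
  rw [isLeftInversion_iff_invParity_eq_one, invParity_mul] at h
  rw [isLeftInversion_iff_invParity_eq_one, isLeftInversion_iff_invParity_eq_one]
  exact (by decide : ∀ a b : ZMod 2, a + b = 1 → a = 1 ∨ b = 1) _ _ h

lemma isLeftInversion_simple_iff {i : B} {t : W} :
    cs.IsLeftInversion (cs.simple i) t ↔ t = cs.simple i := by
  simp [isLeftInversion_iff_invParity_eq_one, invParity_simple]

end Inversions

section AlternatingProducts

variable {cs}

lemma altProd_zero (i j : B) : altProd cs i j 0 = 1 := by
  simp [altProd]

lemma altProd_succ (i j : B) (k : ℕ) : altProd cs i j (k + 1) = cs.simple i * altProd cs j i k := by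
  rw [altProd, altProd, List.range_succ_eq_map, List.map_cons, List.map_map, wordProd_cons,
    if_pos rfl]
  congr 3
  funext n
  obtain hn | hn := Nat.mod_two_eq_zero_or_one n <;> simp [hn, Nat.succ_mod_two_eq_zero_iff]

lemma altProd_eq_wordProd_alternatingWord (i j : B) (k : ℕ) :
    altProd cs i j k =
      cs.wordProd (if Even k then alternatingWord i j k else alternatingWord j i k) := by
  induction k generalizing i j with
  | zero => simp [altProd_zero, alternatingWord]
  | succ k ih =>
    rw [altProd_succ, ih]
    by_cases hk : Even k
    · simp [hk, Nat.even_add_one, alternatingWord_succ', wordProd_cons]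
    · simp [hk, Nat.even_add_one, alternatingWord_succ', wordProd_cons]

lemma longest_comm (i j : B) : longest cs i j = longest cs j i :=
  cs.wordProd_braidWord_eq i j

lemma altProd_eq_longest (i j : B) : altProd cs i j (M i j) = longest cs i j := by
  rw [altProd_eq_wordProd_alternatingWord]
  split_ifs
  · rfl
  · rw [longest_comm, longest, M.symmetric j i]

lemma exists_eq_pow_mul_of_isLeftInversion_altProd {i j : B} {k : ℕ} {t : W}
    (ht : cs.IsLeftInversion (altProd cs i j k) t) :
    ∃ p < k, t = (cs.simple i * cs.simple j) ^ p * cs.simple i := by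
  induction k generalizing i j t with
  | zero => simpa [altProd_zero, IsLeftInversion] using ht.2
  | succ k ih =>
    rw [altProd_succ] at ht
    obtain ht | ht := isLeftInversion_or_of_mul ht
    · exact ⟨0, k.succ_pos, by simpa using isLeftInversion_simple_iff.mp ht⟩
    · obtain ⟨p, hp, hconj⟩ := ih ht
      refine ⟨p + 1, by lia, ?_⟩
      calc t = cs.simple i * ((cs.simple i)⁻¹ * t * cs.simple i) * (cs.simple i)⁻¹ := by group
        _ = cs.simple i * (cs.simple j * cs.simple i) ^ p * cs.simple j * cs.simple i := by
          rw [hconj, cs.inv_simple, ← mul_assoc]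
        _ = (cs.simple i * cs.simple j) ^ (p + 1) * cs.simple i := by
          rw [← mul_pow_mul, pow_succ, mul_assoc _ (cs.simple i) (cs.simple j)]

lemma not_isLeftDescent_altProd {i j : B} {k : ℕ} (hk : M i j = 0 ∨ k < M i j) :
    ¬ cs.IsLeftDescent (altProd cs i j k) j := by
  intro hdesc
  obtain ⟨p, hp, hj⟩ := exists_eq_pow_mul_of_isLeftInversion_altProd
    ((cs.isLeftInversion_simple_iff_isLeftDescent _ _).mpr hdesc)
  have hdvd : M i j ∣ p + 1 := by
    rw [← orderOf_simple_mul_simple cs, orderOf_dvd_iff_pow_eq_one, pow_succ, ← mul_assoc, ← hj,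
      cs.simple_mul_simple_self]
  obtain h0 | hlt := hk
  · simp [h0] at hdvd
  · exact hlt.not_ge ((Nat.le_of_dvd p.succ_pos hdvd).trans hp)

lemma length_altProd {i j : B} {k : ℕ} (hk : M i j = 0 ∨ k ≤ M i j) :
    cs.length (altProd cs i j k) = k := by
  induction k generalizing i j with
  | zero => simp [altProd_zero]
  | succ k ih =>
    rw [M.symmetric] at hk
    rw [altProd_succ, cs.not_isLeftDescent_iff.mp (not_isLeftDescent_altProd hk),
      ih (hk.imp_right Nat.le_of_lt)]

lemma length_longest (i j : B) : cs.length (longest cs i j) = M i j := by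
  rw [← altProd_eq_longest, length_altProd (.inr le_rfl)]

lemma simple_mul_altProd_sub_one (i j : B) {k : ℕ} (hk : k ≠ 0) :
    cs.simple i * altProd cs j i (k - 1) = altProd cs i j k := by
  rw [← altProd_succ, Nat.sub_add_cancel (Nat.pos_of_ne_zero hk)]

lemma isLeftDescent_longest_left {i j : B} (hij : M i j ≠ 0) :
    cs.IsLeftDescent (longest cs i j) i := by
  rw [IsLeftDescent, length_longest, ← altProd_eq_longest, ← simple_mul_altProd_sub_one i j hij,
    cs.simple_mul_simple_cancel_left, length_altProd (.inr (by rw [M.symmetric]; lia))]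
  lia

lemma isLeftDescent_longest_right {i j : B} (hij : M i j ≠ 0) :
    cs.IsLeftDescent (longest cs i j) j := by
  rw [longest_comm]
  exact isLeftDescent_longest_left (by rwa [M.symmetric])

theorem exists_eq_altProd_mul_of_isLeftDescent {w : W} {i j : B} (hi : cs.IsLeftDescent w i)
    (hj : cs.IsLeftDescent w j) {k : ℕ} (hk : M i j = 0 ∨ k ≤ M i j) :
    ∃ x, w = altProd cs i j k * x ∧ cs.length w = k + cs.length x := by
  induction k generalizing i j with
  | zero => exact ⟨w, by simp [altProd_zero]⟩
  | succ k ih =>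
    have hk' : M j i = 0 ∨ k < M j i := by rwa [M.symmetric]
    obtain ⟨x, hwx, hlen⟩ := ih hj hi (hk'.imp_right Nat.le_of_lt)
    set u := altProd cs j i k with hu
    have hinv : cs.IsLeftInversion x (u⁻¹ * cs.simple i * u) := by
      rw [← cs.isLeftInversion_simple_iff_isLeftDescent, hwx] at hi
      refine (isLeftInversion_or_of_mul hi).resolve_left ?_
      rw [cs.isLeftInversion_simple_iff_isLeftDescent]
      exact not_isLeftDescent_altProd hk'
    have hw : w = altProd cs i j (k + 1) * (u⁻¹ * cs.simple i * u * x) := by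
      rw [altProd_succ, ← hu, hwx]
      simp [mul_assoc]
    refine ⟨_, hw, le_antisymm ?_ (by have := hinv.2; lia)⟩
    calc cs.length w ≤ cs.length (altProd cs i j (k + 1)) + _ :=
          (congr_arg cs.length hw).trans_le (cs.length_mul_le _ _)
      _ = k + 1 + _ := by rw [length_altProd hk]

lemma ne_zero_of_isLeftDescent {w : W} {i j : B} (hi : cs.IsLeftDescent w i)
    (hj : cs.IsLeftDescent w j) : M i j ≠ 0 := by
  intro h0
  obtain ⟨x, -, hlen⟩ :=
    exists_eq_altProd_mul_of_isLeftDescent hi hj (k := cs.length w + 1) (.inl h0)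
  lia

end AlternatingProducts

section ParabolicWords

variable {cs}

lemma mem_parabolic_of_isLeftInversion {I : Set B} {w t : W} (hw : w ∈ parabolic cs I)
    (ht : cs.IsLeftInversion w t) : t ∈ parabolic cs I := by
  induction hw using Subgroup.closure_induction'' generalizing t with
  | one => simpa using ht.2
  | mem x hx =>
    obtain ⟨i, hi, rfl⟩ := hx
    rw [isLeftInversion_simple_iff.mp ht]
    exact simple_mem_parabolic hi
  | inv_mem x hx =>
    obtain ⟨i, hi, rfl⟩ := hx
    rw [cs.inv_simple, isLeftInversion_simple_iff] at ht
    rw [ht]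
    exact simple_mem_parabolic hi
  | mul x y hx _ ihx ihy =>
    obtain ht | ht := isLeftInversion_or_of_mul ht
    · exact ihx ht
    · rw [← (parabolic cs I).mul_mem_cancel_right hx,
        ← (parabolic cs I).mul_mem_cancel_left (inv_mem hx), ← mul_assoc]
      exact ihy ht

theorem mem_of_mem_of_wordProd_mem_parabolic {I : Set B} {l : List B} (hl : cs.IsReduced l)
    (hmem : cs.wordProd l ∈ parabolic cs I) {i : B} (hi : i ∈ l) : i ∈ I := by
  induction l with
  | nil => simp at hi
  | cons j l ih =>
    have hdesc : cs.IsLeftDescent (cs.wordProd (j :: l)) j := by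
      rw [IsLeftDescent, hl.eq, wordProd_cons, cs.simple_mul_simple_cancel_left]
      exact Nat.lt_succ_of_le (cs.length_wordProd_le l)
    have hj : cs.simple j ∈ parabolic cs I := mem_parabolic_of_isLeftInversion hmem
      ((cs.isLeftInversion_simple_iff_isLeftDescent _ _).mpr hdesc)
    rw [wordProd_cons, (parabolic cs I).mul_mem_cancel_left hj] at hmem
    obtain rfl | hi := List.mem_cons.mp hi
    · exact simple_mem_parabolic_iff.mp hj
    · exact ih (hl.drop 1) hmem hi

end ParabolicWords

section ComplexElements

variable {cs}

lemma isLeftDescent_mul_of_length_mul_eq_add {u v : W} {i : B} (hi : cs.IsLeftDescent u i)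
    (huv : cs.length (u * v) = cs.length u + cs.length v) : cs.IsLeftDescent (u * v) i := by
  rw [IsLeftDescent, huv, ← mul_assoc]
  exact (cs.length_mul_le _ v).trans_lt (Nat.add_lt_add_right hi _)

lemma IsComplex.mul_left {u v : W} (hv : IsComplex cs v)
    (huv : cs.length (u * v) = cs.length u + cs.length v) : IsComplex cs (u * v) := by
  obtain ⟨a, b, hab, x, y, rfl, hlen⟩ := hv
  have hmul : u * (x * longest cs a b * y) = u * x * longest cs a b * y := by
    simp only [mul_assoc]
  refine ⟨a, b, hab, u * x, y, hmul, ?_⟩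
  have hux := cs.length_mul_le u x
  have hle := cs.length_mul_le (u * x * longest cs a b) y
  have hle' := cs.length_mul_le (u * x) (longest cs a b)
  rw [hmul] at huv ⊢
  lia

lemma isComplex_of_isLeftDescent {w : W} {a b : B} (hab : 3 ≤ M a b) (ha : cs.IsLeftDescent w a)
    (hb : cs.IsLeftDescent w b) : IsComplex cs w := by
  obtain ⟨x, hx, hlen⟩ := exists_eq_altProd_mul_of_isLeftDescent ha hb (.inr le_rfl)
  refine ⟨a, b, hab, 1, x, ?_, ?_⟩
  · rwa [one_mul, ← altProd_eq_longest]
  · rwa [cs.length_one, zero_add, length_longest]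

lemma IsComplex.exists_isLeftDescent {w : W} (hw : IsComplex cs w) :
    (∃ a b, 3 ≤ M a b ∧ cs.IsLeftDescent w a ∧ cs.IsLeftDescent w b) ∨
      ∃ c, cs.IsLeftDescent w c ∧ IsComplex cs (cs.simple c * w) := by
  obtain ⟨a, b, hab, x, y, rfl, hlen⟩ := hw
  obtain rfl | hx := eq_or_ne x 1
  · left
    rw [one_mul, cs.length_one, zero_add] at hlen
    rw [one_mul]
    exact ⟨a, b, hab,
      isLeftDescent_mul_of_length_mul_eq_add (isLeftDescent_longest_left (by lia)) hlen,
      isLeftDescent_mul_of_length_mul_eq_add (isLeftDescent_longest_right (by lia)) hlen⟩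
  · right
    obtain ⟨c, hc⟩ := cs.exists_leftDescent_of_ne_one hx
    have hcx := cs.isLeftDescent_iff.mp hc
    have hle := cs.length_mul_le (x * longest cs a b) y
    have hle' := cs.length_mul_le x (longest cs a b)
    have hcw : cs.IsLeftDescent (x * longest cs a b * y) c := by
      refine isLeftDescent_mul_of_length_mul_eq_add ?_ (by lia)
      exact isLeftDescent_mul_of_length_mul_eq_add hc (by lia)
    have hcw' := cs.isLeftDescent_iff.mp hcw
    refine ⟨c, hcw, a, b, hab, cs.simple c * x, y, by simp only [mul_assoc], by lia⟩

end ComplexElements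

section LeftMultiplication

variable {cs}

lemma commute_simple_of_eq_two {i j : B} (h : M i j = 2) :
    Commute (cs.simple i) (cs.simple j) := by
  have hpow := cs.simple_mul_simple_pow i j
  rw [h, pow_two, mul_eq_one_iff_eq_inv, mul_inv_rev, cs.inv_simple, cs.inv_simple] at hpow
  exact hpow

lemma commute_simple_of_mem_parabolic {s : B} {x : W} (hx : x ∈ parabolic cs {u | M s u = 2}) :
    Commute (cs.simple s) x := by
  have hle : parabolic cs {u | M s u = 2} ≤ Subgroup.centralizer {cs.simple s} :=
    (Subgroup.closure_le _).mpr <| by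
      rintro _ ⟨u, hu, rfl⟩
      exact Subgroup.mem_centralizer_singleton_iff.mpr (commute_simple_of_eq_two hu).symm
  exact (Subgroup.mem_centralizer_singleton_iff.mp (hle hx)).symm

lemma isLeftDescent_of_simple_mul_of_eq_two {w : W} {s c : B} (h : M s c = 2)
    (hc : cs.IsLeftDescent (cs.simple s * w) c) : cs.IsLeftDescent w c := by
  rw [← cs.isLeftInversion_simple_iff_isLeftDescent] at hc ⊢
  obtain hc | hc := isLeftInversion_or_of_mul hc
  · have := orderOf_simple_mul_simple cs s c
    rw [isLeftInversion_simple_iff.mp hc, cs.simple_mul_simple_self, orderOf_one] at this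
    lia
  · rwa [mul_assoc, ← (commute_simple_of_eq_two h).eq, inv_mul_cancel_left] at hc

variable (cs) in
/-- `w` has a reduced factorization `w₁ · (t s t ⋯) · w₃` whose middle factor is one letter short
of `w_{st}`, and in which `w₁` is a product of generators commuting with and distinct from `s`
(which is what `M s u = 2` says of a generator `u`). -/
def HasBraidFactorization (s t : B) (w : W) : Prop :=
  ∃ w₁ ∈ parabolic cs {u | M s u = 2}, ∃ w₃, w = w₁ * altProd cs t s (M s t - 1) * w₃ ∧
    cs.length w = cs.length w₁ + (M s t - 1) + cs.length w₃

lemma three_le_and_hasBraidFactorization_of_isLeftDescent {w : W} {s t : B}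
    (hs : ¬ cs.IsLeftDescent w s) (ht : cs.IsLeftDescent (cs.simple s * w) t) (hts : t ≠ s)
    (h2 : M s t ≠ 2) : 3 ≤ M s t ∧ HasBraidFactorization cs s t w := by
  have hlen := cs.not_isLeftDescent_iff.mp hs
  have hs' : cs.IsLeftDescent (cs.simple s * w) s := by
    rwa [cs.isLeftDescent_iff_not_isLeftDescent_mul, cs.simple_mul_simple_cancel_left]
  have h0 := ne_zero_of_isLeftDescent hs' ht
  have h1 := M.off_diagonal s t hts.symm
  obtain ⟨x, hx, hlen'⟩ := exists_eq_altProd_mul_of_isLeftDescent hs' ht (.inr le_rfl)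
  rw [← simple_mul_altProd_sub_one s t h0, mul_assoc] at hx
  exact ⟨by lia, 1, one_mem _, x, by rw [one_mul, mul_left_cancel hx],
    by rw [cs.length_one]; lia⟩

lemma HasBraidFactorization.simple_mul {w : W} {s t c : B} (h : HasBraidFactorization cs s t w)
    (hsc : M s c = 2) (hc : ¬ cs.IsLeftDescent w c) :
    HasBraidFactorization cs s t (cs.simple c * w) := by
  obtain ⟨x, hx, y, rfl, hlen⟩ := h
  have hcw := cs.not_isLeftDescent_iff.mp hc
  have hcx := cs.length_mul_le (cs.simple c) x
  have hle := cs.length_mul_le (cs.simple c * x) (altProd cs t s (M s t - 1))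
  have hle' := cs.length_mul_le (cs.simple c * x * altProd cs t s (M s t - 1)) y
  rw [length_altProd (.inr (by rw [M.symmetric]; lia))] at hle
  rw [cs.length_simple] at hcx
  refine ⟨cs.simple c * x, mul_mem (simple_mem_parabolic hsc) hx, y, by simp only [mul_assoc], ?_⟩
  simp only [mul_assoc] at hcw hlen hle hle' ⊢
  lia

lemma exists_isComplex_simple_mul_simple_mul {w : W} {s : B} (hw : FullyComm cs w)
    (hsw : IsComplex cs (cs.simple s * w))
    (hdesc : ∀ c, cs.IsLeftDescent (cs.simple s * w) c → c ≠ s → M s c = 2) :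
    ∃ c, M s c = 2 ∧ cs.IsLeftDescent w c ∧ IsComplex cs (cs.simple s * (cs.simple c * w)) := by
  obtain ⟨a, b, hab, ha, hb⟩ | ⟨c, hc, hcomplex⟩ := hsw.exists_isLeftDescent
  · have has : a ≠ s := by
      rintro rfl
      have := hdesc b hb (by rintro rfl; simp at hab)
      lia
    have hbs : b ≠ s := by
      rintro rfl
      have := hdesc a ha has
      rw [M.symmetric] at this
      lia
    exact absurd (isComplex_of_isLeftDescent hab
      (isLeftDescent_of_simple_mul_of_eq_two (hdesc a ha has) ha)
      (isLeftDescent_of_simple_mul_of_eq_two (hdesc b hb hbs) hb)) hw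
  · obtain rfl | hcs := eq_or_ne c s
    · rw [cs.simple_mul_simple_cancel_left] at hcomplex
      exact absurd hcomplex hw
    have hsc := hdesc c hc hcs
    refine ⟨c, hsc, isLeftDescent_of_simple_mul_of_eq_two hsc hc, ?_⟩
    rwa [(commute_simple_of_eq_two hsc).left_comm]

theorem exists_hasBraidFactorization_of_isComplex_simple_mul {w : W} {s : B}
    (hw : FullyComm cs w) (hs : ¬ cs.IsLeftDescent w s) (hsw : IsComplex cs (cs.simple s * w)) :
    ∃ t, 3 ≤ M s t ∧ HasBraidFactorization cs s t w := by
  induction hn : cs.length w using Nat.strong_induction_on generalizing w with | _ n ih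
  subst hn
  by_cases hdesc : ∃ t, cs.IsLeftDescent (cs.simple s * w) t ∧ t ≠ s ∧ M s t ≠ 2
  · obtain ⟨t, ht, hts, h2⟩ := hdesc
    exact ⟨t, three_le_and_hasBraidFactorization_of_isLeftDescent hs ht hts h2⟩
  push Not at hdesc
  obtain ⟨c, hsc, hcw, hcomplex⟩ := exists_isComplex_simple_mul_simple_mul hw hsw hdesc
  obtain ⟨v, rfl⟩ : ∃ v, w = cs.simple c * v :=
    ⟨cs.simple c * w, (cs.simple_mul_simple_cancel_left c).symm⟩
  rw [cs.simple_mul_simple_cancel_left] at hcomplex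
  have hcv : ¬ cs.IsLeftDescent v c := by
    rwa [cs.isLeftDescent_iff_not_isLeftDescent_mul, cs.simple_mul_simple_cancel_left] at hcw
  have hlen := cs.not_isLeftDescent_iff.mp hcv
  have hv : FullyComm cs v := fun h ↦ hw (h.mul_left (by rw [cs.length_simple]; lia))
  have hsv : ¬ cs.IsLeftDescent v s := fun h ↦
    hs (isLeftDescent_of_simple_mul_of_eq_two ((M.symmetric c s).trans hsc)
      (by rwa [cs.simple_mul_simple_cancel_left]))
  obtain ⟨t, ht, hfact⟩ := ih _ (by lia) hv hsv hcomplex rfl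
  exact ⟨t, ht, hfact.simple_mul hsc hcv⟩

end LeftMultiplication

/-- Lemma 4.5(i): if `w` is fully commutative, `ℓ(sw) > ℓ(w)` and `sw` is not fully
commutative, then there are `t ∈ S` with `3 ≤ m(s,t) < ∞` and a reduced factorization
`w = w₁ · w₂ · w₃` where every generator occurring in a reduced word for `w₁` is distinct
from `s` and commutes with `s`, and `w₂` is the alternating product `t s t s ⋯` of length
`m(s,t) − 1` beginning with `t`; consequently `sw` admits reduced factorizations
`s · w₁ · w₂ · w₃` and `w₁ · (s w₂) · w₃`. -/
theorem statement0 (w : W) (s : B) (hw : FullyComm cs w)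
    (hlen : cs.length w < cs.length (cs.simple s * w))
    (hsw : ¬ FullyComm cs (cs.simple s * w)) :
    ∃ t : B, 3 ≤ M s t ∧ ∃ w₁ w₃ : W,
      w = w₁ * altProd cs t s (M s t - 1) * w₃ ∧
      cs.length w =
        cs.length w₁ + cs.length (altProd cs t s (M s t - 1) : W) + cs.length w₃ ∧
      (∀ l : List B, cs.IsReduced l → cs.wordProd l = w₁ → ∀ u ∈ l, u ≠ s ∧ M s u = 2) ∧
      cs.length (cs.simple s * w) =
        1 + cs.length w₁ + cs.length (altProd cs t s (M s t - 1) : W) + cs.length w₃ ∧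
      cs.simple s * w = w₁ * (cs.simple s * altProd cs t s (M s t - 1)) * w₃ ∧
      cs.length (cs.simple s * w) =
        cs.length w₁ + cs.length (cs.simple s * altProd cs t s (M s t - 1) : W) +
          cs.length w₃ := by
  have hs : ¬ cs.IsLeftDescent w s := hlen.not_gt
  obtain ⟨t, ht, w₁, hw₁, w₃, rfl, hlen'⟩ :=
    exists_hasBraidFactorization_of_isComplex_simple_mul hw hs (not_not.mp hsw)
  have length_mid : cs.length (altProd cs t s (M s t - 1)) = M s t - 1 :=
    length_altProd (.inr (by rw [M.symmetric]; lia))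
  have length_mid' : cs.length (cs.simple s * altProd cs t s (M s t - 1)) = M s t := by
    rw [simple_mul_altProd_sub_one s t (by lia), length_altProd (.inr le_rfl)]
  have hlen_sw := cs.not_isLeftDescent_iff.mp hs
  refine ⟨t, ht, w₁, w₃, rfl, by lia, ?_, by lia, ?_, by lia⟩
  · rintro l hl rfl u hu
    have hsu : M s u = 2 := mem_of_mem_of_wordProd_mem_parabolic hl hw₁ hu
    exact ⟨by rintro rfl; simp at hsu, hsu⟩
  · simp only [← mul_assoc, (commute_simple_of_mem_parabolic hw₁).eq]
end

section
/- Let (W, S) be an arbitrary Coxeter system, let w ∈ W_c and s ∈ S be such that sw is weakly complex (i.e. ℓ(sw) > ℓ(w) and sw ∉ W_c). If u ∈ S and y ∈ W are such that w = uy reduced or w = yu reduced, then either sy ∈ W_c or sy is weakly complex. -/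
open CoxeterSystem

variable {B W : Type*} [Group W] {M : CoxeterMatrix B} (cs : CoxeterSystem M W)

section

variable {cs}

theorem IsComplex.mul_mul {x y z : W} (hy : IsComplex cs y)
    (hl : cs.length (x * y * z) = cs.length x + cs.length y + cs.length z) :
    IsComplex cs (x * y * z) := by
  obtain ⟨s, t, hst, x₁, x₂, rfl, hlen⟩ := hy
  have hassoc : x * (x₁ * longest cs s t * x₂) * z = x * x₁ * longest cs s t * (x₂ * z) := by
    simp only [mul_assoc]
  refine ⟨s, t, hst, x * x₁, x₂ * z, hassoc, ?_⟩
  rw [hassoc] at hl ⊢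
  have hx := cs.length_mul_le x x₁
  have hz := cs.length_mul_le x₂ z
  have hlongest := cs.length_mul_le (x * x₁) (longest cs s t)
  have htotal := cs.length_mul_le (x * x₁ * longest cs s t) (x₂ * z)
  omega

theorem FullyComm.of_mul_left {x y : W} (h : FullyComm cs (x * y))
    (hl : cs.length (x * y) = cs.length x + cs.length y) : FullyComm cs x := fun hx =>
  h <| by simpa using hx.mul_mul (x := 1) (z := y) (by simpa using hl)

theorem FullyComm.of_mul_right {x y : W} (h : FullyComm cs (x * y))
    (hl : cs.length (x * y) = cs.length x + cs.length y) : FullyComm cs y := fun hy =>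
  h <| by simpa using hy.mul_mul (x := x) (z := 1) (by simpa using hl)

theorem FullyComm.simple_mul_of_isLeftDescent {y : W} {s : B} (hy : FullyComm cs y)
    (hs : cs.IsLeftDescent y s) : FullyComm cs (cs.simple s * y) := by
  have hcancel : cs.simple s * (cs.simple s * y) = y := cs.simple_mul_simple_cancel_left s
  refine FullyComm.of_mul_right (x := cs.simple s) (by rwa [hcancel]) ?_
  rw [hcancel, cs.length_simple, add_comm, cs.isLeftDescent_iff.mp hs]

theorem statement2_general {y : W} (hy : FullyComm cs y) (s : B) :
    FullyComm cs (cs.simple s * y) ∨ IsWeaklyComplex cs (cs.simple s * y) := by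
  by_cases hs : cs.IsLeftDescent y s
  · exact .inl (hy.simple_mul_of_isLeftDescent hs)
  · have hl : cs.length (cs.simple s * y) = 1 + cs.length y := by
      rw [cs.not_isLeftDescent_iff.mp hs, add_comm]
    exact or_iff_not_imp_left.mpr fun hc => ⟨not_not.mp hc, s, y, hy, rfl, hl⟩

end

/-- Lemma 4.5(iii): let `w` be fully commutative and `s ∈ S` with `sw` weakly complex
(i.e. `ℓ(sw) > ℓ(w)` and `sw ∉ W_c`).  If `u ∈ S` and `y ∈ W` are such that `w = u·y`
reduced or `w = y·u` reduced, then `sy` is fully commutative or `sy` is weakly complex. -/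
theorem statement2 (w : W) (s : B) (hw : FullyComm cs w)
    (h1 : cs.length w < cs.length (cs.simple s * w))
    (h2 : ¬ FullyComm cs (cs.simple s * w))
    (u : B) (y : W)
    (huy : (w = cs.simple u * y ∧ cs.length w = 1 + cs.length y) ∨
           (w = y * cs.simple u ∧ cs.length w = cs.length y + 1)) :
    FullyComm cs (cs.simple s * y) ∨ IsWeaklyComplex cs (cs.simple s * y) := by
  rcases huy with ⟨rfl, hl⟩ | ⟨rfl, hl⟩
  · exact statement2_general (hw.of_mul_right (by rwa [cs.length_simple])) s
  · exact statement2_general (hw.of_mul_left (by rwa [cs.length_simple])) s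
end
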